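/- If E₁ is an injective object of A₁ and E₂ is an injective object of A₂, then the object G(E₁, E₂) = (F₁₂(E₁) ⊞ E₂, E₁, π), where π is the biproduct projection onto F₁₂(E₁), is an injective object of the comma category K = Comma(𝟭_{A₂}, F₁₂). -/

import Mathlib

/-!
STATEMENT 8: If `E₁` is injective in `A₁` and `E₂` is injective in `A₂`, then the
object `G(E₁, E₂) = (F₁₂(E₁) ⊞ E₂, E₁, π)` (with `π` the biproduct projection onto
`F₁₂(E₁)`) is an injective object of the comma category `K = Comma(𝟭 A₂, F₁₂)`.
-/

open CategoryTheory Limits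

universe v₁ v₂ u₁ u₂

variable {A₁ : Type u₁} [Category.{v₁} A₁] [Abelian A₁] [EnoughInjectives A₁]
variable {A₂ : Type u₂} [Category.{v₂} A₂] [Abelian A₂] [EnoughInjectives A₂]
variable (F : A₁ ⥤ A₂)

/-- The object `G(E₁, E₂) = (F₁₂(E₁) ⊞ E₂, E₁, π)`, where `π` is the biproduct
projection onto `F₁₂(E₁)`. -/
noncomputable def cofreeComodule (E₁ : A₁) (E₂ : A₂) : Comma (𝟭 A₂) F where
  left := F.obj E₁ ⊞ E₂
  right := E₁
  hom := biprod.fst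

open scoped ZeroObject in
theorem comma_mono_right {X Y : Comma (𝟭 A₂) F} (f : X ⟶ Y) [Mono f] : Mono f.right := by
  refine ⟨fun {Z} a b hab => ?_⟩
  let T : Comma (𝟭 A₂) F := { left := (0 : A₂), right := Z, hom := (0 : (0 : A₂) ⟶ F.obj Z) }
  let a' : T ⟶ X :=
    { left := (0 : (0 : A₂) ⟶ X.left), right := a, w := (isZero_zero A₂).eq_of_src _ _ }
  let b' : T ⟶ X :=
    { left := (0 : (0 : A₂) ⟶ X.left), right := b, w := (isZero_zero A₂).eq_of_src _ _ }
  have h : a' ≫ f = b' ≫ f := by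
    apply CommaMorphism.ext
    · rfl
    · exact hab
  exact congrArg CommaMorphism.right ((cancel_mono f).1 h)

theorem comma_mono_left [PreservesFiniteLimits F] {X Y : Comma (𝟭 A₂) F} (f : X ⟶ Y) [Mono f] :
    Mono f.left := by
  have := comma_mono_right F f
  refine ⟨fun {Z} a b hab => ?_⟩
  have hd : a ≫ X.hom = b ≫ X.hom := by
    rw [← cancel_mono (F.map f.right), Category.assoc, Category.assoc]
    have hw : f.left ≫ Y.hom = X.hom ≫ F.map f.right := f.w
    erw [← hw]
    exact (Category.assoc _ _ _).symm.trans
      ((congrArg (fun t => t ≫ Y.hom) hab).trans (Category.assoc _ _ _))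
  let T : Comma (𝟭 A₂) F := { left := Z, right := X.right, hom := a ≫ X.hom }
  let a' : T ⟶ X :=
    { left := a, right := 𝟙 _, w := by simp [T] }
  let b' : T ⟶ X :=
    { left := b, right := 𝟙 _, w := by simp [T, hd] }
  have h : a' ≫ f = b' ≫ f := by
    apply CommaMorphism.ext
    · exact hab
    · rfl
  exact congrArg CommaMorphism.left ((cancel_mono f).1 h)

theorem stmt_8 [F.Additive] [PreservesFiniteLimits F]
    (E₁ : A₁) (E₂ : A₂) (h₁ : Injective E₁) (h₂ : Injective E₂) :
    Injective (cofreeComodule F E₁ E₂) := by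
  refine ⟨fun {X Y} g f hf => ?_⟩
  have := comma_mono_right F f
  have := comma_mono_left F f
  let gr : X.right ⟶ E₁ := g.right
  let r : Y.right ⟶ E₁ := Injective.factorThru gr f.right
  have hr : f.right ≫ r = gr := Injective.comp_factorThru gr f.right
  let gl : X.left ⟶ F.obj E₁ ⊞ E₂ := g.left
  let y : Y.left ⟶ F.obj E₁ := Y.hom ≫ F.map r
  let l : Y.left ⟶ E₂ := Injective.factorThru (gl ≫ biprod.snd) f.left
  have hl : f.left ≫ l = gl ≫ biprod.snd := Injective.comp_factorThru _ _
  have hg : gl ≫ biprod.fst = X.hom ≫ F.map gr := g.w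
  have hw : f.left ≫ Y.hom = X.hom ≫ F.map f.right := f.w
  have hy : f.left ≫ y = gl ≫ biprod.fst := by
    rw [hg, ← hr, F.map_comp]
    exact (Category.assoc _ _ _).symm.trans
      ((congrArg (fun t => t ≫ F.map r) hw).trans (Category.assoc _ _ _))
  refine ⟨{ left := biprod.lift y l, right := r, w := biprod.lift_fst y l }, ?_⟩
  apply CommaMorphism.ext
  · change f.left ≫ biprod.lift y l = gl
    apply biprod.hom_ext
    · rw [Category.assoc, biprod.lift_fst, hy]
    · rw [Category.assoc, biprod.lift_snd, hl]
  · exact hr
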